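/- Fix integers k ≤ n with k ≥ 1. Let A be an n×n matrix. Let P be a diagonal projector onto a uniformly random k-element subset of {1,...,n}, and let R be a diagonal projector onto a random subset of {1,...,n} where each coordinate is included independently with probability k/n. Then for every p > 0, (E ‖P A P‖^p)^{1/p} ≤ (2 E ‖R A R‖^p)^{1/p}. -/

import Mathlib

/-!
For `s ⊆ t` the matrix `P_s A P_s` is a compression of `P_t A P_t`, so `G s = ‖P_s A P_s‖ ^ p` is
monotone in `s`. Double counting pairs `s ⊆ t` with `#s = k`, `#t = j` shows that the average of a
monotone function over `j`-subsets is at least its average `M` over `k`-subsets whenever `k ≤ j`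
(`average_mono`). Conditioning the Bernoulli model on the number `X` of selected coordinates gives
`E ‖R A R‖ ^ p ≥ P[X ≥ k] * M`, and it remains to see that `P[X ≥ k] ≥ 1 / 2` for
`X ∼ Binomial(n, k/n)` (`half_le_tail`).

For that, put `a j = P[X = k + j]` and `b j = P[X = k - 1 - j]`. The quotient of consecutive ratios
`a j / b j` is explicit, and shows that `a - b` changes sign at most once, from `+` to `-`, at some
`J ≥ 1` (`exists_crossing`). Since `X` has mean `k`, `∑ j * a j = ∑ (j + 1) * b j`, hence
`J * ∑ (a j - b j) ≥ ∑ j * (a j - b j) = ∑ b j ≥ 0` (`sum_le_of_crossing`).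
-/

open scoped BigOperators

/-- Spectral norm: operator norm of a matrix as a map `ℓ₂ⁿ → ℓ₂ᵐ`. -/
noncomputable def specNorm {m n : ℕ} (A : Matrix (Fin m) (Fin n) ℂ) : ℝ :=
  ‖LinearMap.toContinuousLinearMap (Matrix.toEuclideanLin A)‖

/-- Maximum Euclidean column norm, i.e. the `ℓ₁ → ℓ₂` operator norm. -/
noncomputable def colNorm {m n : ℕ} (A : Matrix (Fin m) (Fin n) ℂ) : ℝ :=
  ⨆ j, Real.sqrt (∑ i, ‖A i j‖ ^ 2)

/-- The diagonal 0–1 projector onto the coordinates in `s`. -/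
def projOf {n : ℕ} (s : Finset (Fin n)) : Matrix (Fin n) (Fin n) ℂ :=
  Matrix.diagonal fun i => if i ∈ s then 1 else 0

/-- Diagonal 0–1 matrix determined by a boolean vector. -/
def bernM {n : ℕ} (f : Fin n → Bool) : Matrix (Fin n) (Fin n) ℂ :=
  Matrix.diagonal fun i => if f i then 1 else 0

/-- Probability weight of the outcome `f` for i.i.d. Bernoulli(ρ) selectors. -/
noncomputable def bw {n : ℕ} (ρ : ℝ) (f : Fin n → Bool) : ℝ :=
  ∏ i, if f i then ρ else 1 - ρ

/-! ### Binomial tails -/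

/-- The probability that a Binomial(n, k/n) variable equals `i`; it vanishes for `i > n`. -/
noncomputable def binW (n k i : ℕ) : ℝ :=
  (n.choose i : ℝ) * ((k : ℝ) / n) ^ i * (1 - (k : ℝ) / n) ^ (n - i)

/-- The lower weights, listed downwards from `k - 1` and extended by zero. -/
noncomputable def lowW (n k j : ℕ) : ℝ := if j < k then binW n k (k - 1 - j) else 0

theorem one_sub_div_nonneg {n k : ℕ} (hkn : k ≤ n) : 0 ≤ 1 - (k : ℝ) / n := by
  have : (k : ℝ) / n ≤ 1 := div_le_one_of_le₀ (by exact_mod_cast hkn) (by positivity)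
  linarith

theorem binW_nonneg {n k : ℕ} (hkn : k ≤ n) (i : ℕ) : 0 ≤ binW n k i := by
  have := one_sub_div_nonneg hkn
  unfold binW
  positivity

theorem lowW_nonneg {n k : ℕ} (hkn : k ≤ n) (i : ℕ) : 0 ≤ lowW n k i := by
  unfold lowW
  split_ifs
  · exact binW_nonneg hkn _
  · exact le_rfl

theorem binW_eq_zero {n k i : ℕ} (h : n < i) : binW n k i = 0 := by
  simp [binW, Nat.choose_eq_zero_of_lt h]

theorem binW_sum (n k : ℕ) : ∑ i ∈ Finset.range (n + 1), binW n k i = 1 := by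
  have h := congrArg (Polynomial.eval ((k : ℝ) / n)) (bernsteinPolynomial.sum ℝ n)
  simpa [Polynomial.eval_finsetSum, bernsteinPolynomial, binW] using h

theorem binW_mean {n : ℕ} (k : ℕ) (hn : 0 < n) :
    ∑ i ∈ Finset.range (n + 1), (i : ℝ) * binW n k i = k := by
  have h := congrArg (Polynomial.eval ((k : ℝ) / n)) (bernsteinPolynomial.sum_smul ℝ n)
  have hn' : (n : ℝ) ≠ 0 := by positivity
  simp only [nsmul_eq_mul, Polynomial.eval_finsetSum, bernsteinPolynomial, Polynomial.eval_mul,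
    Polynomial.eval_natCast, Polynomial.eval_pow, Polynomial.eval_X, Polynomial.eval_sub,
    Polynomial.eval_one] at h
  rw [mul_div_cancel₀ _ hn'] at h
  exact h

/-- The ratio of consecutive binomial weights, with denominators cleared and `n = k + m`. -/
theorem binW_succ {k m : ℕ} (hk : 1 ≤ k) (i : ℕ) (hi : i ≤ k + m) :
    binW (k + m) k (i + 1) * (i + 1) * m = binW (k + m) k i * (k + m - i) * k := by
  have hn : ((k + m : ℕ) : ℝ) ≠ 0 := by positivity
  rcases hi.eq_or_lt with rfl | hi
  · rw [binW_eq_zero (Nat.lt_succ_self _)]; push_cast; ring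
  have hc : (((k + m).choose (i + 1) : ℕ) : ℝ) * (i + 1) = ((k + m).choose i : ℝ) * (k + m - i) := by
    have := Nat.choose_succ_right_eq (k + m) i
    have h2 : (((k + m - i : ℕ)) : ℝ) = k + m - i := by rw [Nat.cast_sub hi.le]; push_cast; ring
    rw [← h2]
    exact_mod_cast this
  obtain ⟨d, hd⟩ : ∃ d, k + m = i + 1 + d := ⟨k + m - (i + 1), by omega⟩
  have e1 : k + m - (i + 1) = d := by omega
  have e2 : k + m - i = d + 1 := by omega
  have hq : 1 - (k : ℝ) / ((k + m : ℕ) : ℝ) = m / ((k + m : ℕ) : ℝ) := by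
    field_simp; push_cast; ring
  unfold binW
  rw [e1, e2, hq]
  set N : ℝ := ((k + m : ℕ) : ℝ)
  calc _ = (((k + m).choose (i + 1) : ℝ) * (i + 1)) * (k / N) ^ (i + 1) * (m / N) ^ d * m := by ring
    _ = _ := by rw [hc]; ring

/-- If `a - b` changes sign at most once, from `+` to `-` and not before index `1`, then the moment
identity `∑ j a_j = ∑ (j + 1) b_j` gives `∑ b ≤ ∑ a`. -/
theorem sum_le_of_crossing (N J : ℕ) (a b : ℕ → ℝ) (hJ : 1 ≤ J) (hb : ∀ j, 0 ≤ b j)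
    (hlo : ∀ j < J, b j ≤ a j) (hhi : ∀ j, J ≤ j → a j ≤ b j)
    (hm : ∑ j ∈ Finset.range N, (j : ℝ) * a j = ∑ j ∈ Finset.range N, ((j : ℝ) + 1) * b j) :
    ∑ j ∈ Finset.range N, b j ≤ ∑ j ∈ Finset.range N, a j := by
  have h1 : ∑ j ∈ Finset.range N, ((j : ℝ) - J) * (a j - b j) ≤ 0 := by
    refine Finset.sum_nonpos fun j _ => ?_
    rcases lt_or_ge j J with h | h
    · have : (j : ℝ) ≤ J := by exact_mod_cast h.le
      exact mul_nonpos_of_nonpos_of_nonneg (by linarith) (by linarith [hlo j h])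
    · have : (J : ℝ) ≤ j := by exact_mod_cast h
      exact mul_nonpos_of_nonneg_of_nonpos (by linarith) (by linarith [hhi j h])
  have h2 : ∑ j ∈ Finset.range N, ((j : ℝ) - J) * (a j - b j)
      = ∑ j ∈ Finset.range N, (j : ℝ) * a j - ∑ j ∈ Finset.range N, ((j : ℝ) + 1) * b j
        + ∑ j ∈ Finset.range N, b j
        - J * (∑ j ∈ Finset.range N, a j - ∑ j ∈ Finset.range N, b j) := by
    rw [← Finset.sum_sub_distrib, ← Finset.sum_sub_distrib, ← Finset.sum_add_distrib,
      Finset.mul_sum, ← Finset.sum_sub_distrib]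
    exact Finset.sum_congr rfl fun j _ => by ring
  have h3 : 0 ≤ ∑ j ∈ Finset.range N, b j := Finset.sum_nonneg fun j _ => hb j
  have hJ' : (0 : ℝ) < J := by exact_mod_cast hJ
  have h4 : 0 ≤ (J : ℝ) * (∑ j ∈ Finset.range N, a j - ∑ j ∈ Finset.range N, b j) := by linarith
  linarith [nonneg_of_mul_nonneg_right h4 hJ']

/-- Recurrence for the lower weights; at `j = k - 1` both sides vanish. -/
theorem lowW_succ {k m : ℕ} (hk : 1 ≤ k) (j : ℕ) (hj : j < k) :
    lowW (k + m) k j * (k - (j + 1)) * m = lowW (k + m) k (j + 1) * (m + 1 + (j + 1)) * k := by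
  obtain ⟨d, rfl⟩ : ∃ d, k = j + 1 + d := ⟨k - (j + 1), by omega⟩
  rcases d with _ | d
  · simp [lowW]
  have h := binW_succ (k := j + 1 + (d + 1)) (m := m) hk d (by omega)
  have e1 : j + 1 + (d + 1) - 1 - j = d + 1 := by omega
  have e2 : j + 1 + (d + 1) - 1 - (j + 1) = d := by omega
  unfold lowW
  rw [if_pos hj, if_pos (by omega), e1, e2]
  push_cast at h ⊢
  linear_combination h

theorem upW_succ {k m : ℕ} (hk : 1 ≤ k) (j : ℕ) (hj : j ≤ m) :
    binW (k + m) k (k + (j + 1)) * (k + (j + 1)) * m = binW (k + m) k (k + j) * (m - j) * k := by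
  have h := binW_succ (k := k) (m := m) hk (k + j) (by omega)
  rw [add_assoc k j 1] at h
  push_cast at h ⊢
  linear_combination h

/-- Single crossing: `P[X = k - 1 - j] ≤ P[X = k + j]` below some index `J ≥ 1`, and the reverse from
`J` on. For `m > 0` and `1 ≤ s < k`, `s ≤ m`, the quotient of the ratios `P[X = k + s] / P[X = k - 1 - s]` at `s` and at
`s - 1` is `((m + 1)² - s²) k² / ((k² - s²) m²)`, and the set of `s` where this is at least `1` is an
initial segment; the ratio at `0` is `(m + 1) / m > 1`. -/
theorem exists_crossing {k m : ℕ} (hk : 1 ≤ k) : ∃ J, 1 ≤ J ∧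
    (∀ j < J, lowW (k + m) k j ≤ binW (k + m) k (k + j)) ∧
    (∀ j, J ≤ j → binW (k + m) k (k + j) ≤ lowW (k + m) k j) := by
  have hkn : k ≤ k + m := by omega
  have hk0 : (0 : ℝ) < k := by exact_mod_cast hk
  set a : ℕ → ℝ := fun j => binW (k + m) k (k + j) with ha
  set b : ℕ → ℝ := fun j => lowW (k + m) k j with hb
  change ∃ J, 1 ≤ J ∧ (∀ j < J, b j ≤ a j) ∧ (∀ j, J ≤ j → a j ≤ b j)
  have ha0 : ∀ j, 0 ≤ a j := fun j => binW_nonneg hkn _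
  have hb0 : ∀ j, 0 ≤ b j := fun j => lowW_nonneg hkn _
  have hbz : ∀ j, k ≤ j → b j = 0 := fun j hj => by simp [hb, lowW, not_lt.2 hj]
  have haz : ∀ j, m < j → a j = 0 := fun j hj => binW_eq_zero (by omega)
  rcases Nat.eq_zero_or_pos m with rfl | hm
  · -- Here `X = k` almost surely, so all lower weights vanish.
    refine ⟨k + 1, by omega, fun j _ => ?_, fun j hj => ?_⟩
    · have : b j = 0 := by
        rcases lt_or_ge j k with h | h
        · have h1 : (k : ℝ) ≠ 0 := hk0.ne'
          have h2 : k + 0 - (k - 1 - j) ≠ 0 := by omega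
          simp only [hb, lowW, if_pos h, binW]
          rw [Nat.add_zero] at h2 ⊢
          rw [div_self h1, sub_self, zero_pow h2, mul_zero]
        · exact hbz j h
      rw [this]; exact ha0 j
    · rw [haz j (by omega)]; exact hb0 j
  have hm0 : (0 : ℝ) < m := by exact_mod_cast hm
  -- `U s` says that the ratio `a / b` does not decrease from `s - 1` to `s`.
  let U : ℕ → Prop := fun s => ((s : ℝ) ^ 2) * (k ^ 2 - m ^ 2) ≤ (2 * m + 1) * k ^ 2
  have hUmono : ∀ s t, s ≤ t → U t → U s := by
    intro s t hst ht
    have hst' : (s : ℝ) ^ 2 ≤ (t : ℝ) ^ 2 := by gcongr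
    rcases le_total ((k : ℝ) ^ 2 - m ^ 2) 0 with h | h
    · have : (s : ℝ) ^ 2 * (k ^ 2 - m ^ 2) ≤ 0 :=
        mul_nonpos_of_nonneg_of_nonpos (by positivity) h
      exact this.trans (by positivity)
    · exact (mul_le_mul_of_nonneg_right hst' h).trans ht
  have base : b 0 ≤ a 0 := by
    have h := binW_succ (k := k) (m := m) hk (k - 1) (by omega)
    have e : k - 1 + 1 = k := by omega
    have e' : ((k - 1 : ℕ) : ℝ) = k - 1 := by rw [Nat.cast_sub hk]; simp
    rw [e, e'] at h
    have hb' : b 0 = binW (k + m) k (k - 1) := by simp [hb, lowW, show 0 < k from hk]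
    have ha' : a 0 = binW (k + m) k k := rfl
    rw [← hb', ← ha'] at h
    have h1 : a 0 * m = b 0 * (m + 1) := by
      apply mul_right_cancel₀ hk0.ne'
      linear_combination h
    have h2 : b 0 * m ≤ a 0 * m := by nlinarith [hb0 0]
    exact le_of_mul_le_mul_right h2 hm0
  -- The two recurrences combined.
  have key : ∀ j, j + 1 < k → j ≤ m →
      a (j + 1) * ((k ^ 2 - ((j : ℝ) + 1) ^ 2) * m ^ 2)
          = a j * ((m - j) * k * ((k - (j + 1)) * m)) ∧
      b (j + 1) * (((m + 1) ^ 2 - ((j : ℝ) + 1) ^ 2) * k ^ 2)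
          = b j * ((m - j) * k * ((k - (j + 1)) * m)) := by
    intro j hj hjm
    have h1 : a (j + 1) * (k + (j + 1)) * m = a j * (m - j) * k := upW_succ hk j hjm
    have h2 : b j * (k - (j + 1)) * m = b (j + 1) * (m + 1 + (j + 1)) * k :=
      lowW_succ hk j (by omega)
    constructor
    · linear_combination ((k : ℝ) - (j + 1)) * m * h1
    · linear_combination -((m : ℝ) - j) * k * h2
  have up : ∀ s, U s → b s ≤ a s := by
    intro s
    induction s with
    | zero => exact fun _ => base
    | succ j ih =>
      intro hU
      have hj := ih (hUmono _ _ (Nat.le_succ j) hU)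
      rcases le_or_gt k (j + 1) with h | h
      · rw [hbz _ h]; exact ha0 _
      have hjk : (j : ℝ) + 1 < k := by exact_mod_cast h
      have hj0 : (0 : ℝ) ≤ j := by positivity
      have hU' : (((j : ℝ) + 1) ^ 2) * (k ^ 2 - m ^ 2) ≤ (2 * m + 1) * k ^ 2 := by
        have := hU; simp only [U] at this; push_cast at this; exact this
      have hD : 0 < ((k : ℝ) ^ 2 - ((j : ℝ) + 1) ^ 2) * m ^ 2 := by
        have : 0 < (k : ℝ) ^ 2 - ((j : ℝ) + 1) ^ 2 := by nlinarith
        positivity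
      have hDE : ((k : ℝ) ^ 2 - ((j : ℝ) + 1) ^ 2) * m ^ 2
          ≤ ((m + 1) ^ 2 - ((j : ℝ) + 1) ^ 2) * k ^ 2 := by linarith
      have hjm : j ≤ m := by
        have h1 : 0 < (((m : ℝ) + 1) ^ 2 - ((j : ℝ) + 1) ^ 2) * k ^ 2 := hD.trans_le hDE
        have h2 : 0 < ((m : ℝ) + 1) ^ 2 - ((j : ℝ) + 1) ^ 2 :=
          pos_of_mul_pos_left h1 (by positivity)
        have h3 : (j : ℝ) + 1 < m + 1 := lt_of_pow_lt_pow_left₀ 2 (by positivity) (by linarith)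
        have h4 : (j : ℝ) ≤ m := by linarith
        exact_mod_cast h4
      have hjm' : (j : ℝ) ≤ m := by exact_mod_cast hjm
      obtain ⟨k1, k2⟩ := key j h hjm
      have hC : 0 ≤ ((m : ℝ) - j) * k * ((k - (j + 1)) * m) :=
        mul_nonneg (mul_nonneg (by linarith) hk0.le) (mul_nonneg (by linarith) hm0.le)
      refine le_of_mul_le_mul_right ?_ hD
      calc _ ≤ b (j + 1) * (((m + 1) ^ 2 - ((j : ℝ) + 1) ^ 2) * k ^ 2) :=
            mul_le_mul_of_nonneg_left hDE (hb0 _)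
        _ = b j * _ := k2
        _ ≤ a j * _ := mul_le_mul_of_nonneg_right hj hC
        _ = _ := k1.symm
  have down : ∀ j, ¬ U (j + 1) → a j ≤ b j → a (j + 1) ≤ b (j + 1) := by
    intro j hU hj
    have hU' : (2 * m + 1) * (k : ℝ) ^ 2 < (((j : ℝ) + 1) ^ 2) * (k ^ 2 - m ^ 2) := by
      have := hU; simp only [U, not_le] at this; push_cast at this; exact this
    have hmk : m < k := by
      by_contra hcon
      have : (k : ℝ) ≤ m := by exact_mod_cast not_lt.1 hcon
      have h2 : (k : ℝ) ^ 2 - m ^ 2 ≤ 0 := by nlinarith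
      have h3 : (((j : ℝ) + 1) ^ 2) * (k ^ 2 - m ^ 2) ≤ 0 :=
        mul_nonpos_of_nonneg_of_nonpos (by positivity) h2
      have h4 : 0 ≤ (2 * m + 1) * (k : ℝ) ^ 2 := by positivity
      linarith
    rcases lt_or_ge m (j + 1) with h | h
    · rw [haz _ h]; exact hb0 _
    have hjk : j + 1 < k := by omega
    obtain ⟨k1, k2⟩ := key j hjk (by omega)
    have hjk' : (j : ℝ) + 1 < k := by exact_mod_cast hjk
    have hjm' : (j : ℝ) + 1 ≤ m := by exact_mod_cast h
    have hj0 : (0 : ℝ) ≤ j := by positivity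
    have hD : 0 < ((k : ℝ) ^ 2 - ((j : ℝ) + 1) ^ 2) * m ^ 2 := by
      have : 0 < (k : ℝ) ^ 2 - ((j : ℝ) + 1) ^ 2 := by nlinarith
      positivity
    have hED : ((m + 1) ^ 2 - ((j : ℝ) + 1) ^ 2) * k ^ 2
        ≤ ((k : ℝ) ^ 2 - ((j : ℝ) + 1) ^ 2) * m ^ 2 := by linarith
    have hC : 0 ≤ ((m : ℝ) - j) * k * ((k - (j + 1)) * m) :=
      mul_nonneg (mul_nonneg (by linarith) hk0.le) (mul_nonneg (by linarith) hm0.le)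
    refine le_of_mul_le_mul_right ?_ hD
    calc _ = a j * _ := k1
      _ ≤ b j * _ := mul_le_mul_of_nonneg_right hj hC
      _ = _ := k2.symm
      _ ≤ _ := mul_le_mul_of_nonneg_left hED (hb0 _)
  by_cases hex : ∃ j, a j < b j
  · classical
    let J := Nat.find hex
    have hJ : a J < b J := Nat.find_spec hex
    have hUJ : ¬ U J := fun h => (up J h).not_gt hJ
    refine ⟨J, ?_, fun j hj => not_lt.1 (Nat.find_min hex hj), fun j hj => ?_⟩
    · rcases Nat.eq_zero_or_pos J with h | h
      · rw [h] at hJ; exact absurd base (not_le.2 hJ)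
      · exact h
    · induction j, hj using Nat.le_induction with
      | base => exact hJ.le
      | succ j hj ih => exact down j (fun h => hUJ (hUmono _ _ (by omega) h)) ih
  · push Not at hex
    exact ⟨k + m + 1, by omega, fun j _ => hex j,
      fun j hj => by rw [haz j (by omega)]; exact hb0 j⟩

/-- Splitting a sum over `{0, …, k + m}` at `k`, with the lower part reversed. -/
theorem sum_split (k m : ℕ) (f : ℕ → ℝ) :
    ∑ i ∈ Finset.range (k + m + 1), f i
      = ∑ j ∈ Finset.range k, f (k - 1 - j) + ∑ j ∈ Finset.range (m + 1), f (k + j) := by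
  rw [add_assoc, Finset.sum_range_add, Finset.sum_range_reflect]

theorem sum_lowW (k m : ℕ) (c : ℕ → ℝ) :
    ∑ j ∈ Finset.range (k + m + 1), c j * lowW (k + m) k j
      = ∑ j ∈ Finset.range k, c j * binW (k + m) k (k - 1 - j) := by
  symm
  rw [← Finset.sum_subset (Finset.range_mono (show k ≤ k + m + 1 by omega))]
  · refine Finset.sum_congr rfl fun j hj => ?_
    rw [lowW, if_pos (Finset.mem_range.1 hj)]
  · intro j _ hj
    rw [lowW, if_neg (by simpa using hj), mul_zero]

theorem sum_upW (k m : ℕ) (c : ℕ → ℝ) :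
    ∑ j ∈ Finset.range (k + m + 1), c j * binW (k + m) k (k + j)
      = ∑ j ∈ Finset.range (m + 1), c j * binW (k + m) k (k + j) := by
  symm
  apply Finset.sum_subset (Finset.range_mono (show m + 1 ≤ k + m + 1 by omega))
  intro j _ hj
  rw [binW_eq_zero (by simp at hj; omega), mul_zero]

/-- A Binomial(k + m, k/(k + m)) variable is at least its mean `k` with probability at least `1/2`. -/
theorem half_le_tail {k m : ℕ} (hk : 1 ≤ k) :
    1 / 2 ≤ ∑ j ∈ Finset.range (m + 1), binW (k + m) k (k + j) := by
  obtain ⟨J, hJ, hlo, hhi⟩ := exists_crossing (m := m) hk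
  have hs := binW_sum (k + m) k
  have hM := binW_mean (n := k + m) k (by omega)
  have hmean : ∑ i ∈ Finset.range (k + m + 1), ((i : ℝ) - k) * binW (k + m) k i = 0 := by
    simp only [sub_mul, Finset.sum_sub_distrib]
    rw [← Finset.mul_sum, hs, hM]; ring
  rw [sum_split] at hs hmean
  have hz : ∑ j ∈ Finset.range k, (((k - 1 - j : ℕ) : ℝ) - k) * binW (k + m) k (k - 1 - j)
      = - ∑ j ∈ Finset.range k, ((j : ℝ) + 1) * binW (k + m) k (k - 1 - j) := by
    rw [← Finset.sum_neg_distrib]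
    refine Finset.sum_congr rfl fun j hj => ?_
    have hj' := Finset.mem_range.1 hj
    have : ((k - 1 - j : ℕ) : ℝ) = k - 1 - j := by
      rw [Nat.cast_sub (by omega), Nat.cast_sub hk]; simp
    rw [this]; ring
  have h := sum_le_of_crossing (k + m + 1) (min J (k + m + 1)) (fun j => binW (k + m) k (k + j))
    (lowW (k + m) k) (by omega) (fun j => lowW_nonneg (by omega) j)
    (fun j hj => hlo j (by omega))
    (fun j hj => by
      rcases le_or_gt J j with h | h
      · exact hhi j h
      · rw [binW_eq_zero (by omega)]; exact lowW_nonneg (by omega) j)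
    (by
      rw [sum_upW k m (fun j => (j : ℝ)), sum_lowW k m (fun j => (j : ℝ) + 1)]
      rw [hz] at hmean
      push_cast at hmean
      simp only [add_sub_cancel_left] at hmean
      linarith)
  have u := sum_upW k m (fun _ => 1)
  have l := sum_lowW k m (fun _ => 1)
  simp only [one_mul] at u l
  rw [u, l] at h
  linarith

/-! ### Averages of monotone set functions -/

theorem card_supersets {n k j : ℕ} (s : Finset (Fin n)) (hs : s.card = k) (hkj : k ≤ j) :
    ((Finset.powersetCard j (Finset.univ : Finset (Fin n))).filter (s ⊆ ·)).card
      = (n - k).choose (j - k) := by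
  have h : (Finset.powersetCard (j - k) sᶜ).card = (n - k).choose (j - k) := by
    rw [Finset.card_powersetCard, Finset.card_compl, Fintype.card_fin, hs]
  rw [← h]
  refine Finset.card_bij' (fun t _ => t \ s) (fun u _ => u ∪ s) ?_ ?_ ?_ ?_
  · intro t ht
    simp only [Finset.mem_filter, Finset.mem_powersetCard] at ht ⊢
    refine ⟨fun x hx => by simp at hx ⊢; exact hx.2, ?_⟩
    rw [Finset.card_sdiff_of_subset ht.2, ht.1.2, hs]
  · intro u hu
    simp only [Finset.mem_filter, Finset.mem_powersetCard] at hu ⊢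
    refine ⟨⟨Finset.subset_univ _, ?_⟩, Finset.subset_union_right⟩
    have hd : Disjoint u s := Finset.disjoint_left.2 fun x hx => by simpa using hu.1 hx
    rw [Finset.card_union_of_disjoint hd, hu.2, hs]
    omega
  · intro t ht
    exact Finset.sdiff_union_of_subset (Finset.mem_filter.1 ht).2
  · intro u hu
    simp only [Finset.mem_powersetCard] at hu
    have hd : Disjoint u s := Finset.disjoint_left.2 fun x hx => by simpa using hu.1 hx
    exact Finset.union_sdiff_cancel_right hd

/-- The average of a monotone set function over `j`-subsets is at least its average over
`k`-subsets when `k ≤ j`. -/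
theorem average_mono {n k j : ℕ} (hkj : k ≤ j) (hjn : j ≤ n) (G : Finset (Fin n) → ℝ)
    (hG : ∀ s t, s ⊆ t → G s ≤ G t) :
    (n.choose j : ℝ) * ((∑ s ∈ Finset.powersetCard k Finset.univ, G s) / (n.choose k : ℝ))
      ≤ ∑ t ∈ Finset.powersetCard j Finset.univ, G t := by
  have h1 : ∀ t ∈ Finset.powersetCard j (Finset.univ : Finset (Fin n)),
      ∑ s ∈ Finset.powersetCard k t, G s ≤ (j.choose k : ℝ) * G t := by
    intro t ht
    have hc : (Finset.powersetCard k t).card = j.choose k := by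
      rw [Finset.card_powersetCard, (Finset.mem_powersetCard.1 ht).2]
    have := Finset.sum_le_card_nsmul (Finset.powersetCard k t) G (G t)
      (fun s hs => hG s t (Finset.mem_powersetCard.1 hs).1)
    rwa [hc, nsmul_eq_mul] at this
  have h2 : ∑ t ∈ Finset.powersetCard j (Finset.univ : Finset (Fin n)),
      ∑ s ∈ Finset.powersetCard k t, G s
      = ((n - k).choose (j - k) : ℝ) * ∑ s ∈ Finset.powersetCard k Finset.univ, G s := by
    rw [Finset.sum_comm' (t' := Finset.powersetCard k Finset.univ)
      (s' := fun s => (Finset.powersetCard j Finset.univ).filter (s ⊆ ·))]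
    · rw [Finset.mul_sum]
      refine Finset.sum_congr rfl fun s hs => ?_
      rw [Finset.sum_const, card_supersets s (Finset.mem_powersetCard.1 hs).2 hkj, nsmul_eq_mul]
    · intro t s
      simp only [Finset.mem_powersetCard, Finset.mem_filter, Finset.subset_univ, true_and]
      tauto
  have h3 := Finset.sum_le_sum h1
  rw [h2, ← Finset.mul_sum] at h3
  have hch : (n.choose j : ℝ) * j.choose k = n.choose k * (n - k).choose (j - k) := by
    exact_mod_cast Nat.choose_mul hkj
  have p1 : (0 : ℝ) < j.choose k := by exact_mod_cast Nat.choose_pos hkj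
  have p2 : (0 : ℝ) < n.choose k := by exact_mod_cast Nat.choose_pos (hkj.trans hjn)
  refine le_of_mul_le_mul_left ?_ p1
  refine le_trans (le_of_eq ?_) h3
  rw [mul_div_assoc', mul_div_assoc', div_eq_iff p2.ne']
  linear_combination (∑ s ∈ Finset.powersetCard k Finset.univ, G s) * hch

/-! ### Monotonicity of the norm and the Bernoulli model -/

theorem projOf_mul_projOf {n : ℕ} {s t : Finset (Fin n)} (h : s ⊆ t) :
    projOf s * projOf t = projOf s ∧ projOf t * projOf s = projOf s := by
  unfold projOf
  rw [Matrix.diagonal_mul_diagonal, Matrix.diagonal_mul_diagonal]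
  constructor <;> congr 1 <;> funext i <;> by_cases hi : i ∈ s <;> simp [hi, @h i]

open scoped Matrix.Norms.L2Operator in
theorem specNorm_mono {n : ℕ} (A : Matrix (Fin n) (Fin n) ℂ) {s t : Finset (Fin n)} (h : s ⊆ t) :
    specNorm (projOf s * A * projOf s) ≤ specNorm (projOf t * A * projOf t) := by
  change ‖projOf s * A * projOf s‖ ≤ ‖projOf t * A * projOf t‖
  have hp : ‖(projOf s : Matrix (Fin n) (Fin n) ℂ)‖ ≤ 1 := by
    rw [projOf, Matrix.l2_opNorm_diagonal]
    refine (pi_norm_le_iff_of_nonneg zero_le_one).2 fun i => ?_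
    split_ifs <;> simp
  obtain ⟨h1, h2⟩ := projOf_mul_projOf h
  have e : projOf s * A * projOf s = projOf s * (projOf t * A * projOf t) * projOf s := by
    calc projOf s * A * projOf s = (projOf s * projOf t) * A * (projOf t * projOf s) := by
          rw [h1, h2]
      _ = _ := by simp only [Matrix.mul_assoc]
  rw [e]
  calc _ ≤ ‖projOf s * (projOf t * A * projOf t)‖ * ‖projOf s‖ := Matrix.l2_opNorm_mul _ _
    _ ≤ ‖projOf s * (projOf t * A * projOf t)‖ := mul_le_of_le_one_right (norm_nonneg _) hp
    _ ≤ ‖projOf s‖ * ‖projOf t * A * projOf t‖ := Matrix.l2_opNorm_mul _ _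
    _ ≤ _ := mul_le_of_le_one_left (norm_nonneg _) hp

theorem specNorm_nonneg {n : ℕ} (A : Matrix (Fin n) (Fin n) ℂ) : 0 ≤ specNorm A := norm_nonneg _

/-- The Bernoulli model, decomposed according to the number of selected coordinates. -/
theorem bernoulli_sum {n : ℕ} (ρ : ℝ) (H : Matrix (Fin n) (Fin n) ℂ → ℝ) :
    ∑ f : Fin n → Bool, bw ρ f * H (bernM f)
      = ∑ j ∈ Finset.range (n + 1), ρ ^ j * (1 - ρ) ^ (n - j) *
          ∑ s ∈ Finset.powersetCard j Finset.univ, H (projOf s) := by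
  have h1 : ∑ f : Fin n → Bool, bw ρ f * H (bernM f)
      = ∑ s ∈ (Finset.univ : Finset (Fin n)).powerset,
          ρ ^ s.card * (1 - ρ) ^ (n - s.card) * H (projOf s) := by
    refine Finset.sum_bij' (fun f _ => Finset.univ.filter fun i => f i = true)
      (fun s _ i => decide (i ∈ s)) ?_ ?_ ?_ ?_ ?_
    · simp
    · simp
    · intro f _; funext i; simp
    · intro s _; ext i; simp
    · intro f _
      have hb : bernM f = projOf (Finset.univ.filter fun i => f i = true) := by
        simp [bernM, projOf]
      have hc : (Finset.univ.filter fun i => ¬ f i = true).card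
          = n - (Finset.univ.filter fun i => f i = true).card := by
        rw [Finset.filter_not, ← Finset.compl_eq_univ_sdiff, Finset.card_compl, Fintype.card_fin]
      rw [hb, bw, Finset.prod_ite, Finset.prod_const, Finset.prod_const, hc]
  rw [h1, Finset.sum_powerset, Finset.card_univ, Fintype.card_fin]
  refine Finset.sum_congr rfl fun j _ => ?_
  rw [Finset.mul_sum]
  refine Finset.sum_congr rfl fun s hs => ?_
  rw [(Finset.mem_powersetCard.1 hs).2]

/-- Equivalence of the two random coordinate models. -/
theorem random_coordinate_models (n k : ℕ) (hk : 1 ≤ k) (hkn : k ≤ n)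
    (A : Matrix (Fin n) (Fin n) ℂ) (p : ℝ) (hp : 0 < p) :
    ((∑ s ∈ Finset.univ.filter (fun s : Finset (Fin n) => s.card = k),
        specNorm (projOf s * A * projOf s) ^ p) / (n.choose k : ℝ)) ^ (1/p)
      ≤ (2 * ∑ f : Fin n → Bool,
          bw ((k : ℝ)/n) f * specNorm (bernM f * A * bernM f) ^ p) ^ (1/p) := by
  obtain ⟨m, rfl⟩ := Nat.exists_eq_add_of_le hkn
  have hfilter : Finset.univ.filter (fun s : Finset (Fin (k + m)) => s.card = k)
      = Finset.powersetCard k Finset.univ := by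
    ext s; simp [Finset.mem_powersetCard]
  rw [hfilter, bernoulli_sum _ fun R => specNorm (R * A * R) ^ p]
  set G : Finset (Fin (k + m)) → ℝ := fun s => specNorm (projOf s * A * projOf s) ^ p with hGdef
  have hG0 : ∀ s, 0 ≤ G s := fun s => Real.rpow_nonneg (specNorm_nonneg _) _
  have hG : ∀ s t, s ⊆ t → G s ≤ G t := fun s t h =>
    Real.rpow_le_rpow (specNorm_nonneg _) (specNorm_mono A h) hp.le
  set M : ℝ := (∑ s ∈ Finset.powersetCard k Finset.univ, G s) / ((k + m).choose k : ℝ) with hMdef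
  have hM : 0 ≤ M := div_nonneg (Finset.sum_nonneg fun s _ => hG0 s) (by positivity)
  refine Real.rpow_le_rpow hM ?_ (by positivity)
  have hq := one_sub_div_nonneg hkn
  rw [sum_split]
  have hlow : 0 ≤ ∑ j ∈ Finset.range k, (((k : ℝ) / (k + m : ℕ)) ^ (k - 1 - j) *
      (1 - (k : ℝ) / (k + m : ℕ)) ^ (k + m - (k - 1 - j)) *
        ∑ s ∈ Finset.powersetCard (k - 1 - j) Finset.univ, G s) :=
    Finset.sum_nonneg fun j _ => mul_nonneg (by positivity) (Finset.sum_nonneg fun s _ => hG0 s)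
  have hup : (∑ j ∈ Finset.range (m + 1), binW (k + m) k (k + j)) * M
      ≤ ∑ j ∈ Finset.range (m + 1), (((k : ℝ) / (k + m : ℕ)) ^ (k + j) *
      (1 - (k : ℝ) / (k + m : ℕ)) ^ (k + m - (k + j)) *
        ∑ s ∈ Finset.powersetCard (k + j) Finset.univ, G s) := by
    rw [Finset.sum_mul]
    refine Finset.sum_le_sum fun j hj => ?_
    have hj' := Finset.mem_range.1 hj
    have h := average_mono (n := k + m) (k := k) (j := k + j) (by omega) (by omega) G hG
    calc _ = ((k : ℝ) / (k + m : ℕ)) ^ (k + j) * (1 - (k : ℝ) / (k + m : ℕ)) ^ (k + m - (k + j)) *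
          (((k + m).choose (k + j) : ℝ) * M) := by unfold binW; ring
      _ ≤ _ := mul_le_mul_of_nonneg_left h (by positivity)
  have htail := mul_le_mul_of_nonneg_right (half_le_tail (m := m) hk) hM
  linarith
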